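/- Let $1<\alpha<2$, $n\geq 2$, $0\leq x<1$, and $h\in S^{n-1}$ with last coordinate $h_n$. With $\mathbf{x}=(0,\ldots,0,x)$, $p=\frac{\alpha-1}{2}$, and $g(x,h):=\mathrm{p.v.}\int_{-xh_n-\sqrt{x^2h_n^2-x^2+1}}^{-xh_n+\sqrt{x^2h_n^2-x^2+1}} \frac{(1-|\mathbf{x}|^2)^p - (1-|\mathbf{x}+th|^2)^p}{|t|^{1+\alpha}}\,dt$, one has $g(x,h) \geq c_1\,|h_n|^{\alpha}\,(1-x^2)^{-\frac{\alpha+1}{2}} + c_2\,(1-x^2)^{-\frac{\alpha-1}{2}}$, where $c_1=\frac{B(\frac{\alpha+1}{2},\frac{2-\alpha}{2})-2^{\alpha}}{\alpha}$ and $c_2=\frac{2^{\alpha}-2}{\alpha}$. -/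

import Mathlib

open MeasureTheory Metric Set Filter
open scoped ENNReal Topology

/-- The Euler beta function. -/
noncomputable def eulerBeta (a b : ℝ) : ℝ :=
  Real.Gamma a * Real.Gamma b / Real.Gamma (a + b)

/-!
Write `w` for half the length of the chord `{𝐱 + th : -a < t < c}` of the unit ball and
`p = (α - 1)/2`, so that `1 - |𝐱 + th|² = (a + t)(c - t)` and `1 - x² = ac`. The Möbius map
`t ↦ wt / H(t)`, with `H(t) = ac + (c - a)t/2`, carries the chord to `(-1, 1)` and fixes the
singularity. Splitting the numerator at `H(t)^(2p) / (ac)^p` leaves a singular part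
`((ac)^p - H(t)^(2p) / (ac)^p) / |t|^(1+α)` with an elementary antiderivative, and a remainder that
is the pullback of the integrable kernel `(1 - (1 - u²)^p) / |u|^(1+α)`, whose integral is a beta
function. The principal value is therefore
`(w^α B((α+1)/2, (2-α)/2) - a^α - c^α) / α · (ac)^(-(α+1)/2)`. The bound combines `|h_n| ≤ w`,
`2^α ≤ B((α+1)/2, (2-α)/2)` (log-convexity of `Γ`) and
`a^α + c^α + (2^α - 2) ac ≤ (a + c)^α` for `a + c ≤ 2`.
-/

lemma hasDerivAt_affine_rpow {D m t : ℝ} (q : ℝ) (h : D + m * t ≠ 0) :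
    HasDerivAt (fun t ↦ (D + m * t) ^ q) (m * q * (D + m * t) ^ (q - 1)) t := by
  simpa using (((hasDerivAt_id t).const_mul m).const_add D).rpow_const (p := q) (.inl h)

lemma hasDerivAt_one_add_rpow {y : ℝ} (q : ℝ) (hy : -1 < y) :
    HasDerivAt (fun y ↦ (1 + y) ^ q) (q * (1 + y) ^ (q - 1)) y := by
  simpa using hasDerivAt_affine_rpow (D := 1) (m := 1) (t := y) q (by linarith)

lemma hasDerivAt_one_sub_rpow {y : ℝ} (q : ℝ) (hy : y < 1) :
    HasDerivAt (fun y ↦ (1 - y) ^ q) (-(q * (1 - y) ^ (q - 1))) y := by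
  simpa [← sub_eq_add_neg] using
    hasDerivAt_affine_rpow (D := 1) (m := -1) (t := y) q (by linarith)

/-! ### Principal values -/

lemma integral_Ioo_eq_sub_of_hasDerivAt {f G : ℝ → ℝ} {u v : ℝ} (huv : u ≤ v)
    (hf : ContinuousOn f (Icc u v)) (hG : ∀ t ∈ Icc u v, HasDerivAt G (f t) t) :
    ∫ t in Ioo u v, f t = G v - G u := by
  rw [← integral_Ioc_eq_integral_Ioo, ← intervalIntegral.integral_of_le huv]
  refine intervalIntegral.integral_eq_sub_of_hasDerivAt (fun t ht ↦ hG t ?_)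
    (hf.intervalIntegrable_of_Icc huv)
  rwa [uIcc_of_le huv] at ht

/-- `g` is the Cauchy principal value `p.v. ∫ t in s, f t` with respect to the singularity `0`.
Truncations are required to be integrable, so that their integrals carry no junk value. -/
structure HasPrincipalValue (f : ℝ → ℝ) (s : Set ℝ) (g : ℝ) : Prop where
  integrableOn : ∀ ε > 0, IntegrableOn f (s ∩ {t | ε < |t|})
  tendsto : Tendsto (fun ε : ℝ ↦ ∫ t in s ∩ {t | ε < |t|}, f t) (𝓝[>] 0) (𝓝 g)

namespace HasPrincipalValue

variable {f₁ f₂ : ℝ → ℝ} {s : Set ℝ} {g₁ g₂ : ℝ}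

lemma measurableSet_truncation (ε : ℝ) : MeasurableSet {t : ℝ | ε < |t|} :=
  measurableSet_lt measurable_const measurable_id.abs

lemma congr (hs : MeasurableSet s) (h₁ : HasPrincipalValue f₁ s g₁) (heq : EqOn f₁ f₂ (s \ {0})) :
    HasPrincipalValue f₂ s g₁ := by
  have heq' : ∀ ε > 0, EqOn f₁ f₂ (s ∩ {t | ε < |t|}) := fun ε hε t ht ↦
    heq ⟨ht.1, fun h0 : t = 0 ↦ by simpa [h0, hε.not_gt] using ht.2⟩
  refine ⟨fun ε hε ↦ (h₁.integrableOn ε hε).congr_fun (heq' ε hε)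
    (hs.inter (measurableSet_truncation ε)), h₁.tendsto.congr' ?_⟩
  filter_upwards [self_mem_nhdsWithin] with ε hε
  exact setIntegral_congr_fun (hs.inter (measurableSet_truncation ε)) (heq' ε hε)

lemma const_mul (h₁ : HasPrincipalValue f₁ s g₁) (k : ℝ) :
    HasPrincipalValue (fun t ↦ k * f₁ t) s (k * g₁) :=
  ⟨fun ε hε ↦ (h₁.integrableOn ε hε).const_mul k,
    by simpa only [integral_const_mul] using h₁.tendsto.const_mul k⟩

lemma add (h₁ : HasPrincipalValue f₁ s g₁) (h₂ : HasPrincipalValue f₂ s g₂) :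
    HasPrincipalValue (fun t ↦ f₁ t + f₂ t) s (g₁ + g₂) := by
  refine ⟨fun ε hε ↦ (h₁.integrableOn ε hε).add (h₂.integrableOn ε hε),
    (h₁.tendsto.add h₂.tendsto).congr' ?_⟩
  filter_upwards [self_mem_nhdsWithin] with ε hε
  exact (integral_add (h₁.integrableOn ε hε) (h₂.integrableOn ε hε)).symm

lemma of_integrableOn (hf : IntegrableOn f₁ s) : HasPrincipalValue f₁ s (∫ t in s, f₁ t) := by
  refine ⟨fun ε _ ↦ hf.mono_set inter_subset_left, ?_⟩
  have cover : AECover (volume.restrict s) (𝓝[>] 0) fun ε : ℝ ↦ {t : ℝ | ε < |t|} :=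
    { ae_eventually_mem := by
        filter_upwards [ae_restrict_of_ae (Measure.ae_ne volume (0 : ℝ))] with t ht
        exact (eventually_lt_nhds (abs_pos.mpr ht)).filter_mono nhdsWithin_le_nhds
      measurableSet := measurableSet_truncation }
  simpa only [Measure.restrict_restrict (measurableSet_truncation _), inter_comm s] using
    cover.integral_tendsto_of_countably_generated hf

lemma Ioo_inter_truncation {a c ε : ℝ} (hεa : -a ≤ ε) (hεc : -ε ≤ c) :
    Ioo (-a) c ∩ {t | ε < |t|} = Ioo (-a) (-ε) ∪ Ioo ε c := by
  ext t
  simp only [mem_inter_iff, mem_Ioo, mem_ofPred_eq, mem_union, lt_abs]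
  grind

lemma of_hasDerivAt {f G : ℝ → ℝ} {a c : ℝ} (ha : 0 < a) (hc : 0 < c)
    (hf : ContinuousOn f (Icc (-a) c \ {0}))
    (hG : ∀ t ∈ Icc (-a) c \ {0}, HasDerivAt G (f t) t)
    (hsymm : Tendsto (fun ε ↦ G ε - G (-ε)) (𝓝[>] 0) (𝓝 0)) :
    HasPrincipalValue f (Ioo (-a) c) (G c - G (-a)) := by
  have subset_left : ∀ ε > 0, Icc (-a) (-ε) ⊆ Icc (-a) c \ {0} := by
    rintro ε hε t ⟨hat, htε⟩
    exact ⟨⟨hat, by linarith⟩, by grind⟩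
  have subset_right : ∀ ε > 0, Icc ε c ⊆ Icc (-a) c \ {0} := by
    rintro ε hε t ⟨hεt, htc⟩
    exact ⟨⟨by linarith, htc⟩, by grind⟩
  have integrable_left : ∀ ε > 0, IntegrableOn f (Icc (-a) (-ε)) := fun ε hε ↦
    (hf.mono (subset_left ε hε)).integrableOn_Icc
  have integrable_right : ∀ ε > 0, IntegrableOn f (Icc ε c) := fun ε hε ↦
    (hf.mono (subset_right ε hε)).integrableOn_Icc
  refine ⟨fun ε hε ↦ ((integrable_left ε hε).union (integrable_right ε hε)).mono_set ?_, ?_⟩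
  · rintro t ⟨⟨hat, htc⟩, hεt : ε < |t|⟩
    rcases lt_abs.mp hεt with h | h
    exacts [.inr ⟨h.le, htc.le⟩, .inl ⟨hat.le, by linarith⟩]
  · rw [← sub_zero (G c - G (-a))]
    refine (hsymm.const_sub (G c - G (-a))).congr' ?_
    filter_upwards [self_mem_nhdsWithin, Ioo_mem_nhdsGT (lt_min ha hc)] with ε hε hεac
    obtain ⟨hεa, hεc⟩ := lt_min_iff.mp hεac.2
    have disj : Disjoint (Ioo (-a) (-ε)) (Ioo ε c) := by
      rw [Ioo_disjoint_Ioo]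
      grind
    rw [Ioo_inter_truncation (by grind) (by grind), setIntegral_union disj measurableSet_Ioo
      ((integrable_left ε hε).mono_set Ioo_subset_Icc_self)
      ((integrable_right ε hε).mono_set Ioo_subset_Icc_self),
      integral_Ioo_eq_sub_of_hasDerivAt (by linarith) (hf.mono (subset_left ε hε))
        fun t ht ↦ hG t (subset_left ε hε ht),
      integral_Ioo_eq_sub_of_hasDerivAt hεc.le (hf.mono (subset_right ε hε))
        fun t ht ↦ hG t (subset_right ε hε ht)]
    ring

end HasPrincipalValue

lemma tendsto_symmetric_slope {f : ℝ → ℝ} {f' x : ℝ} (hf : HasDerivAt f f' x) :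
    Tendsto (fun ε ↦ (f (x + ε) - f (x - ε)) / ε) (𝓝[>] 0) (𝓝 (2 * f')) := by
  have hadd : HasDerivAt (fun ε ↦ f (x + ε)) f' 0 := .comp_const_add x 0 (by simpa using hf)
  have hsub : HasDerivAt (fun ε ↦ f (x - ε)) (-f') 0 := .comp_const_sub x 0 (by simpa using hf)
  convert! (hadd.sub hsub).tendsto_slope_zero_right using 2
  · simp [div_eq_inv_mul]
  · ring

lemma tendsto_secondDifference_div_rpow {f f' : ℝ → ℝ} {x α : ℝ} (hα₀ : 0 < α) (hα₂ : α < 2)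
    (hf : ∀ᶠ y in 𝓝 x, HasDerivAt f (f' y) y) (hf' : DifferentiableAt ℝ f' x) :
    Tendsto (fun ε ↦ (f (x + ε) + f (x - ε) - 2 * f x) / ε ^ α) (𝓝[>] 0) (𝓝 0) := by
  have tendsto_add : Tendsto (fun ε ↦ x + ε) (𝓝[>] 0) (𝓝 x) :=
    (Continuous.tendsto' (by fun_prop) _ _ (add_zero x)).mono_left nhdsWithin_le_nhds
  have tendsto_sub : Tendsto (fun ε ↦ x - ε) (𝓝[>] 0) (𝓝 x) :=
    (Continuous.tendsto' (by fun_prop) _ _ (sub_zero x)).mono_left nhdsWithin_le_nhds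
  have tendsto_rpow : ∀ {r : ℝ}, 0 < r → Tendsto (fun ε : ℝ ↦ ε ^ r) (𝓝[>] 0) (𝓝 0) := fun hr ↦
    ((Real.continuous_rpow_const hr.le).tendsto' _ _ (Real.zero_rpow hr.ne')).mono_left
      nhdsWithin_le_nhds
  have derivative_quotient :
      Tendsto (fun ε ↦ (f' (x + ε) - f' (x - ε)) / (α * ε ^ (α - 1))) (𝓝[>] 0) (𝓝 0) := by
    have slope_mul_rpow := ((tendsto_symmetric_slope hf'.hasDerivAt).mul
      (tendsto_rpow (sub_pos.mpr hα₂))).div_const α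
    rw [mul_zero, zero_div] at slope_mul_rpow
    refine slope_mul_rpow.congr' ?_
    filter_upwards [self_mem_nhdsWithin] with ε (hε : 0 < ε)
    rw [show 2 - α = 1 - (α - 1) by ring, Real.rpow_sub hε 1, Real.rpow_one]
    field_simp
  refine HasDerivAt.lhopital_zero_nhdsGT (f' := fun ε ↦ f' (x + ε) - f' (x - ε))
    (g' := fun ε ↦ α * ε ^ (α - 1)) ?_ ?_ ?_ ?_ (tendsto_rpow hα₀) derivative_quotient
  · filter_upwards [tendsto_add.eventually hf, tendsto_sub.eventually hf] with ε hadd hsub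
    convert! ((hadd.comp_const_add x ε).add (hsub.comp_const_sub x ε)).sub_const (2 * f x) using 1
  · filter_upwards [self_mem_nhdsWithin] with ε hε
    exact Real.hasDerivAt_rpow_const (.inl (ne_of_gt hε))
  · filter_upwards [self_mem_nhdsWithin] with ε hε
    exact (mul_pos hα₀ (Real.rpow_pos_of_pos hε _)).ne'
  · have hcont := hf.self_of_nhds.continuousAt.tendsto
    convert! ((hcont.comp tendsto_add).add (hcont.comp tendsto_sub)).sub_const (2 * f x) using 2
    ring

/-! ### The affine kernel -/

lemma hasDerivAt_mul_abs_rpow (r : ℝ) {t : ℝ} (ht : t ≠ 0) :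
    HasDerivAt (fun t ↦ t * |t| ^ r) ((r + 1) * |t| ^ r) t := by
  have habs : |t| ≠ 0 := abs_ne_zero.mpr ht
  convert! (hasDerivAt_id t).mul ((hasDerivAt_abs ht).rpow_const (p := r) (.inl habs)) using 1
  rw [id_eq, Real.rpow_sub_one habs]
  field_simp
  linear_combination (-r) * self_mul_sign t

/-- Antiderivative of `(D^(α-1) - (D + mt)^(α-1)) |t|^(-1-α)` away from `0`. It is unbounded at `0`,
but only through an even term, which is invisible to the principal value. -/
noncomputable def affineKernelPrimitive (α D m t : ℝ) : ℝ :=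
  ((D + m * t) ^ α - D ^ α) / (α * D) * (t * |t| ^ (-1 - α))

section AffineKernel

variable {α D m : ℝ}

lemma affineKernelPrimitive_of_pos {t : ℝ} (hα : α ≠ 0) (ht : 0 < t) :
    affineKernelPrimitive α D m t = ((D + m * t) ^ α - D ^ α) * t ^ (-α) / (α * D) := by
  rw [affineKernelPrimitive, abs_of_pos ht, div_mul_eq_mul_div,
    show -α = 1 + (-1 - α) by ring, Real.rpow_one_add' ht.le (by contrapose! hα; linarith)]

lemma affineKernelPrimitive_neg (t : ℝ) :
    affineKernelPrimitive α D m (-t) = -affineKernelPrimitive α D (-m) t := by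
  simp only [affineKernelPrimitive, abs_neg]
  ring_nf

lemma hasDerivAt_affineKernelPrimitive {t : ℝ} (hα : α ≠ 0) (hD : D ≠ 0) (ht : t ≠ 0)
    (haffine : D + m * t ≠ 0) :
    HasDerivAt (affineKernelPrimitive α D m)
      ((D ^ (α - 1) - (D + m * t) ^ (α - 1)) * |t| ^ (-1 - α)) t := by
  convert! (((hasDerivAt_affine_rpow α haffine).sub_const (D ^ α)).div_const (α * D)).mul
    (hasDerivAt_mul_abs_rpow (-1 - α) ht) using 1
  rw [Real.rpow_sub_one hD, Real.rpow_sub_one haffine]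
  field_simp
  ring

lemma tendsto_affineKernelPrimitive_sub (hα₀ : 0 < α) (hα₂ : α < 2) (hD : D ≠ 0) :
    Tendsto (fun ε ↦ affineKernelPrimitive α D m ε - affineKernelPrimitive α D m (-ε))
      (𝓝[>] 0) (𝓝 0) := by
  have nhds_ne : ∀ᶠ t in 𝓝 (0 : ℝ), D + m * t ≠ 0 :=
    ContinuousAt.eventually_ne (by fun_prop) (by simpa using hD)
  have secondDifference := (tendsto_secondDifference_div_rpow hα₀ hα₂
    (nhds_ne.mono fun t ↦ hasDerivAt_affine_rpow α)
    ((hasDerivAt_affine_rpow (α - 1) nhds_ne.self_of_nhds).const_mul _).differentiableAt).div_const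
      (α * D)
  rw [zero_div] at secondDifference
  refine secondDifference.congr' ?_
  filter_upwards [self_mem_nhdsWithin] with ε (hε : 0 < ε)
  rw [affineKernelPrimitive_neg, affineKernelPrimitive_of_pos hα₀.ne' hε,
    affineKernelPrimitive_of_pos hα₀.ne' hε, Real.rpow_neg hε.le]
  simp only [zero_add, zero_sub, mul_zero, add_zero, mul_neg, neg_mul]
  field_simp
  ring

lemma hasPrincipalValue_rpow_sub_affine_rpow {a c : ℝ} (hα₀ : 0 < α) (hα₂ : α < 2)
    (ha : 0 < a) (hc : 0 < c) (hleft : 0 < D - m * a) (hright : 0 < D + m * c) :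
    HasPrincipalValue (fun t ↦ (D ^ (α - 1) - (D + m * t) ^ (α - 1)) * |t| ^ (-1 - α))
      (Ioo (-a) c)
      ((((D + m * c) ^ α - D ^ α) * c ^ (-α) + ((D - m * a) ^ α - D ^ α) * a ^ (-α)) /
        (α * D)) := by
  have affine_ne : ∀ t ∈ Icc (-a) c, D + m * t ≠ 0 := by
    rintro t ⟨hat, htc⟩
    rcases le_total 0 m with hm | hm <;> nlinarith
  have hD : D ≠ 0 := by
    simpa using affine_ne 0 ⟨by linarith, hc.le⟩
  have hcont : ContinuousOn (fun t ↦ (D ^ (α - 1) - (D + m * t) ^ (α - 1)) * |t| ^ (-1 - α))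
      (Icc (-a) c \ {0}) := fun t ht ↦ ContinuousAt.continuousWithinAt <|
    (continuousAt_const.sub
      (hasDerivAt_affine_rpow (α - 1) (affine_ne t ht.1)).continuousAt).mul
        (continuous_abs.continuousAt.rpow_const (.inl (abs_ne_zero.mpr ht.2)))
  convert! HasPrincipalValue.of_hasDerivAt ha hc hcont
    (fun t ht ↦ hasDerivAt_affineKernelPrimitive hα₀.ne' hD ht.2 (affine_ne t ht.1))
    (tendsto_affineKernelPrimitive_sub hα₀ hα₂ hD) using 1
  rw [affineKernelPrimitive_neg, affineKernelPrimitive_of_pos hα₀.ne' ha,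
    affineKernelPrimitive_of_pos hα₀.ne' hc]
  ring_nf

end AffineKernel

/-! ### The symmetric kernel as a beta integral -/

lemma eulerBeta_comm (a b : ℝ) : eulerBeta a b = eulerBeta b a := by
  rw [eulerBeta, eulerBeta, mul_comm, add_comm]

lemma eulerBeta_add_one_right {a b : ℝ} (hb : b ≠ 0) (hab : a + b ≠ 0) :
    eulerBeta a (b + 1) = b / (a + b) * eulerBeta a b := by
  rw [eulerBeta, eulerBeta, ← add_assoc, Real.Gamma_add_one hb, Real.Gamma_add_one hab]
  field_simp

lemma ofReal_rpow_mul_one_sub_rpow {a b v : ℝ} (hv : v ∈ Ioo (0 : ℝ) 1) :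
    (v : ℂ) ^ ((a : ℂ) - 1) * (1 - (v : ℂ)) ^ ((b : ℂ) - 1) =
      ((v ^ (a - 1) * (1 - v) ^ (b - 1) : ℝ) : ℂ) := by
  rw [Complex.ofReal_mul, Complex.ofReal_cpow hv.1.le, Complex.ofReal_cpow (sub_pos.mpr hv.2).le]
  norm_cast

lemma integrableOn_rpow_mul_one_sub_rpow {a b : ℝ} (ha : 0 < a) (hb : 0 < b) :
    IntegrableOn (fun v : ℝ ↦ v ^ (a - 1) * (1 - v) ^ (b - 1)) (Ioo 0 1) := by
  have complex := Complex.betaIntegral_convergent (u := a) (v := b) (by simpa) (by simpa)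
  rw [intervalIntegrable_iff_integrableOn_Ioo_of_le zero_le_one] at complex
  exact (complex.congr_fun (fun v hv ↦ ofReal_rpow_mul_one_sub_rpow hv) measurableSet_Ioo).re

lemma integral_rpow_mul_one_sub_rpow {a b : ℝ} (ha : 0 < a) (hb : 0 < b) :
    ∫ v in Ioo (0 : ℝ) 1, v ^ (a - 1) * (1 - v) ^ (b - 1) = eulerBeta a b := by
  rw [show eulerBeta a b = ProbabilityTheory.beta a b from rfl,
    ProbabilityTheory.beta_eq_betaIntegralReal a b ha hb, Complex.betaIntegral,
    intervalIntegral.integral_of_le zero_le_one, integral_Ioc_eq_integral_Ioo,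
    setIntegral_congr_fun measurableSet_Ioo fun v hv ↦ ofReal_rpow_mul_one_sub_rpow hv,
    integral_complex_ofReal, Complex.ofReal_re]

section BetaKernel

variable {q s : ℝ}

lemma one_sub_one_sub_rpow_nonneg {v : ℝ} (hq : 0 ≤ q) (hv : v ∈ Icc (0 : ℝ) 1) :
    0 ≤ 1 - (1 - v) ^ q :=
  sub_nonneg.mpr (Real.rpow_le_one (by linarith [hv.2]) (by linarith [hv.1]) hq)

lemma one_sub_one_sub_rpow_le {v : ℝ} (hq : 0 ≤ q) (hv : v ∈ Ico (0 : ℝ) 1) :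
    1 - (1 - v) ^ q ≤ (q + 1) * v := by
  have bernoulli := one_add_mul_self_le_rpow_one_add (s := -v) (by linarith [hv.2])
    (show 1 ≤ q + 1 by linarith)
  have antitone := Real.rpow_le_rpow_of_exponent_ge (x := 1 - v) (by linarith [hv.2])
    (by linarith [hv.1]) (show q ≤ q + 1 by linarith)
  rw [← sub_eq_add_neg] at bernoulli
  linarith

lemma integrableOn_one_sub_one_sub_rpow_mul_rpow (hq : 0 ≤ q) (hs : s < 1) :
    IntegrableOn (fun v : ℝ ↦ (1 - (1 - v) ^ q) * v ^ (-1 - s)) (Ioo 0 1) := by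
  have integrable_rpow : IntegrableOn (fun v : ℝ ↦ (q + 1) * v ^ (-s)) (Ioo 0 1) :=
    ((intervalIntegral.integrableOn_Ioo_rpow_iff one_pos).mpr (by linarith)).const_mul _
  refine Integrable.mono' integrable_rpow (by fun_prop) ?_
  rw [ae_restrict_iff' measurableSet_Ioo]
  refine ae_of_all _ fun v hv ↦ ?_
  rw [Real.norm_of_nonneg (mul_nonneg (one_sub_one_sub_rpow_nonneg hq (Ioo_subset_Icc_self hv))
    (Real.rpow_nonneg hv.1.le _)), show -1 - s = -s - 1 by ring, Real.rpow_sub_one hv.1.ne',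
    ← mul_div_assoc, div_le_iff₀ hv.1]
  have := mul_le_mul_of_nonneg_right (one_sub_one_sub_rpow_le hq (Ioo_subset_Ico_self hv))
    (Real.rpow_nonneg hv.1.le (-s))
  linarith

lemma tendsto_one_sub_one_sub_rpow_mul_rpow_zero (hq : 0 ≤ q) (hs : s < 1) :
    Tendsto (fun v : ℝ ↦ (1 - (1 - v) ^ q) * v ^ (-s)) (𝓝[>] 0) (𝓝 0) := by
  have upper : Tendsto (fun v : ℝ ↦ (q + 1) * v ^ (1 - s)) (𝓝[>] 0) (𝓝 0) := by
    have hcont : Continuous fun v : ℝ ↦ (q + 1) * v ^ (1 - s) :=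
      continuous_const.mul (Real.continuous_rpow_const (by linarith))
    exact (hcont.tendsto' 0 0 (by simp [Real.zero_rpow (by linarith : 1 - s ≠ 0)])).mono_left
      nhdsWithin_le_nhds
  refine squeeze_zero' ?_ ?_ upper
  all_goals filter_upwards [Ioo_mem_nhdsGT one_pos] with v hv
  · exact mul_nonneg (one_sub_one_sub_rpow_nonneg hq (Ioo_subset_Icc_self hv))
      (Real.rpow_nonneg hv.1.le _)
  · rw [sub_eq_add_neg 1 s, Real.rpow_add hv.1, Real.rpow_one, ← mul_assoc]
    exact mul_le_mul_of_nonneg_right (one_sub_one_sub_rpow_le hq (Ioo_subset_Ico_self hv))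
      (Real.rpow_nonneg hv.1.le _)

lemma integral_one_sub_one_sub_rpow_mul_rpow (hq : 0 < q) (hs₀ : s ≠ 0) (hs₁ : s < 1) :
    ∫ v in Ioo (0 : ℝ) 1, (1 - (1 - v) ^ q) * v ^ (-1 - s) =
      (q * eulerBeta (1 - s) q - 1) / s := by
  have integrable_beta := (integrableOn_rpow_mul_one_sub_rpow (sub_pos.mpr hs₁) hq).const_mul q
  have integrable_kernel :=
    (integrableOn_one_sub_one_sub_rpow_mul_rpow hq.le hs₁).const_mul s
  have tendsto_one : Tendsto (fun v : ℝ ↦ (1 - (1 - v) ^ q) * v ^ (-s)) (𝓝[<] 1) (𝓝 1) := by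
    have : ContinuousAt (fun v : ℝ ↦ (1 - (1 - v) ^ q) * v ^ (-s)) 1 := by
      refine ContinuousAt.mul ?_ (Real.continuousAt_rpow_const _ _ (.inl one_ne_zero))
      exact (continuous_const.sub ((continuous_const.sub continuous_id).rpow_const
        fun _ ↦ .inr hq.le)).continuousAt
    simpa [Real.zero_rpow hq.ne'] using this.tendsto.mono_left nhdsWithin_le_nhds
  have hderiv : ∀ v ∈ Ioo (0 : ℝ) 1, HasDerivAt (fun v : ℝ ↦ (1 - (1 - v) ^ q) * v ^ (-s))
      (q * (v ^ (1 - s - 1) * (1 - v) ^ (q - 1)) - s * ((1 - (1 - v) ^ q) * v ^ (-1 - s))) v := by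
    intro v hv
    convert! ((hasDerivAt_one_sub_rpow q hv.2).const_sub 1).mul
      (Real.hasDerivAt_rpow_const (p := -s) (.inl hv.1.ne')) using 1
    ring_nf
  have ftc := intervalIntegral.integral_eq_sub_of_hasDerivAt_of_tendsto one_pos hderiv
    ((intervalIntegrable_iff_integrableOn_Ioo_of_le zero_le_one).mpr
      (integrable_beta.sub integrable_kernel))
    (tendsto_one_sub_one_sub_rpow_mul_rpow_zero hq.le hs₁) tendsto_one
  rw [intervalIntegral.integral_of_le zero_le_one, integral_Ioc_eq_integral_Ioo,
    integral_sub integrable_beta integrable_kernel, integral_const_mul, integral_const_mul,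
    integral_rpow_mul_one_sub_rpow (sub_pos.mpr hs₁) hq] at ftc
  rw [eq_div_iff hs₀]
  linarith

end BetaKernel

section SquareSubstitution

variable {f : ℝ → ℝ}

lemma image_sq_Ioo_zero_one : (fun u : ℝ ↦ u ^ 2) '' Ioo 0 1 = Ioo 0 1 := by
  refine subset_antisymm ?_ fun v hv ↦ ⟨√v, ⟨Real.sqrt_pos.mpr hv.1, ?_⟩, Real.sq_sqrt hv.1.le⟩
  · rintro _ ⟨u, hu, rfl⟩
    exact ⟨pow_pos hu.1 2, pow_lt_one₀ hu.1.le hu.2 two_ne_zero⟩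
  · rw [Real.sqrt_lt' one_pos, one_pow]
    exact hv.2

lemma hasDerivWithinAt_sq (s : Set ℝ) (u : ℝ) :
    HasDerivWithinAt (fun u ↦ u ^ 2) (2 * u) s u := by
  simpa using (hasDerivAt_pow 2 u).hasDerivWithinAt

lemma injOn_sq_Ioo_zero_one : InjOn (fun u : ℝ ↦ u ^ 2) (Ioo 0 1) :=
  (pow_left_strictMonoOn₀ two_ne_zero).injOn.mono fun _ hu ↦ hu.1.le

lemma intervalIntegrable_abs_mul_comp_sq (hf : IntegrableOn f (Ioo 0 1)) :
    IntervalIntegrable (fun u ↦ |u| * f (u ^ 2)) volume 0 1 := by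
  rw [← image_sq_Ioo_zero_one, integrableOn_image_iff_integrableOn_abs_deriv_smul measurableSet_Ioo
    (fun u _ ↦ hasDerivWithinAt_sq _ u) injOn_sq_Ioo_zero_one] at hf
  rw [intervalIntegrable_iff_integrableOn_Ioo_of_le zero_le_one]
  refine (hf.const_mul 2⁻¹).congr (ae_of_all _ fun u ↦ ?_)
  simp only [abs_mul, Nat.abs_ofNat, smul_eq_mul]
  ring

lemma intervalIntegral_abs_mul_comp_sq :
    ∫ u in (0 : ℝ)..1, |u| * f (u ^ 2) = 2⁻¹ * ∫ v in Ioo 0 1, f v := by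
  rw [intervalIntegral.integral_of_le zero_le_one, integral_Ioc_eq_integral_Ioo]
  conv_rhs => rw [← image_sq_Ioo_zero_one]
  rw [integral_image_eq_integral_abs_deriv_smul measurableSet_Ioo
    (fun u _ ↦ hasDerivWithinAt_sq _ u) injOn_sq_Ioo_zero_one, ← integral_const_mul]
  congr 1 with u
  simp only [abs_mul, Nat.abs_ofNat, smul_eq_mul]
  ring

lemma intervalIntegrable_neg_one_zero_abs_mul_comp_sq (hf : IntegrableOn f (Ioo 0 1)) :
    IntervalIntegrable (fun u ↦ |u| * f (u ^ 2)) volume (-1) 0 := by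
  rw [IntervalIntegrable.iff_comp_neg, neg_neg, neg_zero]
  simpa only [abs_neg, neg_sq] using (intervalIntegrable_abs_mul_comp_sq hf).symm

lemma integrableOn_abs_mul_comp_sq (hf : IntegrableOn f (Ioo 0 1)) :
    IntegrableOn (fun u ↦ |u| * f (u ^ 2)) (Ioo (-1) 1) := by
  rw [← intervalIntegrable_iff_integrableOn_Ioo_of_le (by norm_num)]
  exact (intervalIntegrable_neg_one_zero_abs_mul_comp_sq hf).trans
    (intervalIntegrable_abs_mul_comp_sq hf)

lemma integral_abs_mul_comp_sq (hf : IntegrableOn f (Ioo 0 1)) :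
    ∫ u in Ioo (-1 : ℝ) 1, |u| * f (u ^ 2) = ∫ v in Ioo 0 1, f v := by
  have reflect := intervalIntegral.integral_comp_neg (a := (-1 : ℝ)) (b := 0)
    fun u ↦ |u| * f (u ^ 2)
  simp only [abs_neg, neg_sq, neg_neg, neg_zero] at reflect
  rw [← integral_Ioc_eq_integral_Ioo, ← intervalIntegral.integral_of_le (by norm_num),
    ← intervalIntegral.integral_add_adjacent_intervals
      (intervalIntegrable_neg_one_zero_abs_mul_comp_sq hf) (intervalIntegrable_abs_mul_comp_sq hf),
    reflect, intervalIntegral_abs_mul_comp_sq]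
  ring

end SquareSubstitution

section SymmetricKernel

variable {p α : ℝ}

lemma abs_mul_sq_kernel_eq (p α u : ℝ) :
    |u| * ((1 - (1 - u ^ 2) ^ p) * (u ^ 2) ^ (-1 - α / 2)) =
      (1 - (1 - u ^ 2) ^ p) * |u| ^ (-1 - α) := by
  rcases eq_or_ne u 0 with rfl | hu
  · simp
  · have hu' : 0 < |u| := abs_pos.mpr hu
    have exponent : |u| * (u ^ 2) ^ (-1 - α / 2) = |u| ^ (-1 - α) := by
      rw [← sq_abs, ← Real.rpow_natCast, ← Real.rpow_mul hu'.le]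
      nth_rw 1 [← Real.rpow_one |u|]
      rw [← Real.rpow_add hu']
      push_cast
      ring_nf
    rw [← exponent]
    ring

lemma integrableOn_one_sub_one_sub_sq_rpow_mul_abs_rpow (hp : 0 ≤ p) (hα : α < 2) :
    IntegrableOn (fun u : ℝ ↦ (1 - (1 - u ^ 2) ^ p) * |u| ^ (-1 - α)) (Ioo (-1) 1) := by
  simpa only [abs_mul_sq_kernel_eq] using integrableOn_abs_mul_comp_sq
    (integrableOn_one_sub_one_sub_rpow_mul_rpow hp (show α / 2 < 1 by linarith))

lemma integral_one_sub_one_sub_sq_rpow_mul_abs_rpow (hp : 0 < p) (hα₀ : α ≠ 0) (hα₂ : α < 2) :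
    ∫ u in Ioo (-1 : ℝ) 1, (1 - (1 - u ^ 2) ^ p) * |u| ^ (-1 - α) =
      (p * eulerBeta (1 - α / 2) p - 1) / (α / 2) := by
  have hα₁ : α / 2 < 1 := by linarith
  rw [← integral_one_sub_one_sub_rpow_mul_rpow hp (div_ne_zero hα₀ two_ne_zero) hα₁,
    ← integral_abs_mul_comp_sq (integrableOn_one_sub_one_sub_rpow_mul_rpow hp.le hα₁)]
  simp only [abs_mul_sq_kernel_eq]

lemma integral_one_sub_one_sub_sq_rpow_half (hα₁ : 1 < α) (hα₂ : α < 2) :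
    ∫ u in Ioo (-1 : ℝ) 1, (1 - (1 - u ^ 2) ^ ((α - 1) / 2)) * |u| ^ (-1 - α) =
      (eulerBeta ((α + 1) / 2) ((2 - α) / 2) - 2) / α := by
  have hp : 0 < (α - 1) / 2 := by linarith
  rw [integral_one_sub_one_sub_sq_rpow_mul_abs_rpow hp (by linarith) hα₂, eulerBeta_comm (_ / 2),
    show (α + 1) / 2 = (α - 1) / 2 + 1 by ring, show 1 - α / 2 = (2 - α) / 2 by ring,
    eulerBeta_add_one_right hp.ne' (by linarith),
    show (2 - α) / 2 + (α - 1) / 2 = 1 / 2 by ring]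
  field_simp

end SymmetricKernel

/-! ### The Möbius coordinate on a chord -/

/-- The Möbius map fixing `0` that carries the endpoints `-a`, `c` of a chord to `-1`, `1`. -/
noncomputable def chordCoord (a c t : ℝ) : ℝ :=
  (a + c) / 2 * t / (a * c + (c - a) / 2 * t)

section ChordCoord

variable {a c t : ℝ}

lemma chordCoord_denom_pos (ha : 0 < a) (hc : 0 < c) (ht : t ∈ Icc (-a) c) :
    0 < a * c + (c - a) / 2 * t := by
  obtain ⟨hat, htc⟩ := ht
  rcases le_total 0 t with h | h
  · nlinarith [mul_nonneg ha.le (sub_nonneg.mpr htc), mul_nonneg hc.le h, mul_pos ha hc]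
  · nlinarith [mul_nonneg ha.le (neg_nonneg.mpr h), mul_pos ha hc,
      mul_nonneg hc.le (neg_le_iff_add_nonneg.mp hat)]

lemma one_sub_chordCoord (ht : a * c + (c - a) / 2 * t ≠ 0) :
    1 - chordCoord a c t = a * (c - t) / (a * c + (c - a) / 2 * t) := by
  rw [chordCoord, one_sub_div ht]
  ring

lemma one_add_chordCoord (ht : a * c + (c - a) / 2 * t ≠ 0) :
    1 + chordCoord a c t = c * (a + t) / (a * c + (c - a) / 2 * t) := by
  rw [chordCoord, one_add_div ht]
  ring

lemma one_sub_chordCoord_sq (ht : a * c + (c - a) / 2 * t ≠ 0) :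
    1 - chordCoord a c t ^ 2 =
      a * c * ((a + t) * (c - t)) / (a * c + (c - a) / 2 * t) ^ 2 := by
  rw [← one_pow, sq_sub_sq, one_sub_chordCoord ht, one_add_chordCoord ht, div_mul_div_comm]
  ring

lemma hasDerivAt_chordCoord (ht : a * c + (c - a) / 2 * t ≠ 0) :
    HasDerivAt (chordCoord a c) ((a + c) / 2 * (a * c) / (a * c + (c - a) / 2 * t) ^ 2) t := by
  convert! ((hasDerivAt_id t).const_mul ((a + c) / 2)).div
    (((hasDerivAt_id t).const_mul ((c - a) / 2)).const_add (a * c)) ht using 1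
  simp only [id_eq]
  ring

lemma injOn_chordCoord (ha : 0 < a) (hc : 0 < c) : InjOn (chordCoord a c) (Ioo (-a) c) := by
  intro s hs t ht hst
  rw [chordCoord, chordCoord,
    div_eq_div_iff (chordCoord_denom_pos ha hc (Ioo_subset_Icc_self hs)).ne'
      (chordCoord_denom_pos ha hc (Ioo_subset_Icc_self ht)).ne'] at hst
  refine mul_left_cancel₀ (show (a + c) / 2 * (a * c) ≠ 0 by positivity) ?_
  linear_combination hst

lemma image_chordCoord (ha : 0 < a) (hc : 0 < c) :
    chordCoord a c '' Ioo (-a) c = Ioo (-1) 1 := by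
  refine subset_antisymm ?_ ?_
  · rintro _ ⟨t, ht, rfl⟩
    have hpos := chordCoord_denom_pos ha hc (Ioo_subset_Icc_self ht)
    have hlt : 0 < 1 - chordCoord a c t := by
      rw [one_sub_chordCoord hpos.ne']
      exact div_pos (mul_pos ha (sub_pos.mpr ht.2)) hpos
    have hgt : 0 < 1 + chordCoord a c t := by
      rw [one_add_chordCoord hpos.ne']
      exact div_pos (mul_pos hc (by linarith [ht.1])) hpos
    constructor <;> linarith
  · rintro u ⟨hu₁, hu₂⟩
    have hd : 0 < a * (1 + u) + c * (1 - u) :=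
      add_pos (mul_pos ha (by linarith)) (mul_pos hc (by linarith))
    set t := 2 * (a * c) * u / (a * (1 + u) + c * (1 - u)) with ht
    have add_t : a + t = a * (a + c) * (1 + u) / (a * (1 + u) + c * (1 - u)) := by
      rw [ht]; field_simp; ring
    have sub_t : c - t = c * (a + c) * (1 - u) / (a * (1 + u) + c * (1 - u)) := by
      rw [ht]; field_simp; ring
    have ht_mem : t ∈ Ioo (-a) c := by
      constructor
      · have : 0 < a + t := add_t ▸ div_pos (mul_pos (by positivity) (by linarith)) hd
        linarith
      · have : 0 < c - t := sub_t ▸ div_pos (mul_pos (by positivity) (by linarith)) hd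
        linarith
    refine ⟨t, ht_mem, ?_⟩
    rw [chordCoord, div_eq_iff (chordCoord_denom_pos ha hc (Ioo_subset_Icc_self ht_mem)).ne', ht]
    field_simp
    ring

lemma abs_deriv_chordCoord_mul_kernel {α : ℝ} (ha : 0 < a) (hc : 0 < c) (ht : t ∈ Ioo (-a) c) :
    |(a + c) / 2 * (a * c) / (a * c + (c - a) / 2 * t) ^ 2| *
        ((1 - (1 - chordCoord a c t ^ 2) ^ ((α - 1) / 2)) * |chordCoord a c t| ^ (-1 - α)) =
      ((a + c) / 2) ^ (-α) * (a * c) *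
        (((a * c + (c - a) / 2 * t) ^ (α - 1) - (a * c * ((a + t) * (c - t))) ^ ((α - 1) / 2)) *
          |t| ^ (-1 - α)) := by
  set w := (a + c) / 2 with hw
  have hw₀ : 0 < w := by positivity
  have hH := chordCoord_denom_pos ha hc (Ioo_subset_Icc_self ht)
  have hat : 0 ≤ a + t := by linarith [ht.1]
  have hct : 0 ≤ c - t := by linarith [ht.2]
  rw [one_sub_chordCoord_sq hH.ne', chordCoord, ← hw]
  set H := a * c + (c - a) / 2 * t
  have sq_rpow : (H ^ 2) ^ ((α - 1) / 2) = H ^ (α - 1) := by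
    rw [← Real.rpow_natCast, ← Real.rpow_mul hH.le]
    push_cast
    ring_nf
  have rpow_neg : H ^ (-1 - α) = (H ^ 2 * H ^ (α - 1))⁻¹ := by
    rw [← Real.rpow_natCast, ← Real.rpow_add hH, ← Real.rpow_neg hH.le]
    push_cast
    ring_nf
  have w_rpow : w ^ (-1 - α) = w ^ (-α) / w := by
    rw [← Real.rpow_sub_one hw₀.ne']
    ring_nf
  rw [abs_of_pos (by positivity), abs_div, abs_mul, abs_of_pos hw₀, abs_of_pos hH,
    Real.div_rpow (by positivity) (by positivity), Real.div_rpow (by positivity) hH.le,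
    Real.mul_rpow hw₀.le (abs_nonneg t), sq_rpow, rpow_neg, w_rpow]
  field_simp

lemma integrableOn_affine_rpow_sub_quadratic_rpow {α : ℝ} (hα₁ : 1 ≤ α) (hα₂ : α < 2)
    (ha : 0 < a) (hc : 0 < c) :
    IntegrableOn (fun t ↦ ((a * c + (c - a) / 2 * t) ^ (α - 1) -
      (a * c * ((a + t) * (c - t))) ^ ((α - 1) / 2)) * |t| ^ (-1 - α)) (Ioo (-a) c) := by
  have pullback := integrableOn_one_sub_one_sub_sq_rpow_mul_abs_rpow
    (show 0 ≤ (α - 1) / 2 by linarith) hα₂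
  rw [← image_chordCoord ha hc, integrableOn_image_iff_integrableOn_abs_deriv_smul measurableSet_Ioo
    (fun t ht ↦ (hasDerivAt_chordCoord
      (chordCoord_denom_pos ha hc (Ioo_subset_Icc_self ht)).ne').hasDerivWithinAt)
    (injOn_chordCoord ha hc)] at pullback
  have hk : ((a + c) / 2) ^ (-α) * (a * c) ≠ 0 := by positivity
  exact (integrable_const_mul_iff hk.isUnit _).mp
    (pullback.congr_fun (fun t ht ↦ abs_deriv_chordCoord_mul_kernel ha hc ht) measurableSet_Ioo)

lemma integral_affine_rpow_sub_quadratic_rpow {α : ℝ} (hα₁ : 1 < α) (hα₂ : α < 2)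
    (ha : 0 < a) (hc : 0 < c) :
    ∫ t in Ioo (-a) c, ((a * c + (c - a) / 2 * t) ^ (α - 1) -
        (a * c * ((a + t) * (c - t))) ^ ((α - 1) / 2)) * |t| ^ (-1 - α) =
      ((a + c) / 2) ^ α * (eulerBeta ((α + 1) / 2) ((2 - α) / 2) - 2) / (α * (a * c)) := by
  have hw : 0 < (a + c) / 2 := by positivity
  have pullback := integral_one_sub_one_sub_sq_rpow_half hα₁ hα₂
  rw [← image_chordCoord ha hc, integral_image_eq_integral_abs_deriv_smul measurableSet_Ioo
    (fun t ht ↦ (hasDerivAt_chordCoord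
      (chordCoord_denom_pos ha hc (Ioo_subset_Icc_self ht)).ne').hasDerivWithinAt)
    (injOn_chordCoord ha hc)] at pullback
  simp only [smul_eq_mul] at pullback
  rw [setIntegral_congr_fun measurableSet_Ioo fun t ht ↦
      abs_deriv_chordCoord_mul_kernel (α := α) ha hc ht,
    integral_const_mul, Real.rpow_neg hw.le, ← eq_inv_mul_iff_mul_eq₀ (by positivity)] at pullback
  rw [pullback]
  field_simp

end ChordCoord

/-! ### Bounds for the constants -/

/-- Log-convexity: `1 - p` and `1` trisect the interval between `1 - 2p` and `1 + p`. -/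
lemma Gamma_one_sub_le {p : ℝ} (hp₁ : -1 < p) (hp₂ : p < 1 / 2) :
    Real.Gamma (1 - p) ≤ Real.Gamma (1 - 2 * p) * Real.Gamma (1 + p) := by
  have hx : 1 - 2 * p ∈ Ioi (0 : ℝ) := mem_Ioi.mpr (by linarith)
  have hy : 1 + p ∈ Ioi (0 : ℝ) := mem_Ioi.mpr (by linarith)
  have at_one_sub := Real.convexOn_log_Gamma.2 hx hy
    (by norm_num : (0 : ℝ) ≤ 2 / 3) (by norm_num : (0 : ℝ) ≤ 1 / 3) (by norm_num)
  have at_one := Real.convexOn_log_Gamma.2 hx hy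
    (by norm_num : (0 : ℝ) ≤ 1 / 3) (by norm_num : (0 : ℝ) ≤ 2 / 3) (by norm_num)
  simp only [smul_eq_mul, Function.comp_apply] at at_one_sub at_one
  rw [show 2 / 3 * (1 - 2 * p) + 1 / 3 * (1 + p) = 1 - p by ring] at at_one_sub
  rw [show 1 / 3 * (1 - 2 * p) + 2 / 3 * (1 + p) = 1 by ring, Real.Gamma_one,
    Real.log_one] at at_one
  have hΓx := Real.Gamma_pos_of_pos hx
  have hΓy := Real.Gamma_pos_of_pos hy
  rw [← Real.log_le_log_iff (Real.Gamma_pos_of_pos (by linarith)) (mul_pos hΓx hΓy),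
    Real.log_mul hΓx.ne' hΓy.ne']
  linarith

lemma two_rpow_le_eulerBeta {α : ℝ} (hα₁ : -1 < α) (hα₂ : α < 2) :
    2 ^ α ≤ eulerBeta ((α + 1) / 2) ((2 - α) / 2) := by
  obtain ⟨p, rfl⟩ : ∃ p, α = 1 + 2 * p := ⟨(α - 1) / 2, by ring⟩
  have duplication := Real.Gamma_mul_Gamma_add_half (1 / 2 - p)
  rw [show 1 / 2 - p + 1 / 2 = 1 - p by ring, show 2 * (1 / 2 - p) = 1 - 2 * p by ring,
    show 1 - (1 - 2 * p) = 2 * p by ring] at duplication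
  rw [eulerBeta, show (1 + 2 * p + 1) / 2 = 1 + p by ring,
    show (2 - (1 + 2 * p)) / 2 = 1 / 2 - p by ring, show 1 + p + (1 / 2 - p) = 1 / 2 + 1 by ring,
    Real.Gamma_add_one (by norm_num), Real.Gamma_one_half_eq, le_div_iff₀ (by positivity),
    Real.rpow_add two_pos, Real.rpow_one]
  refine le_of_mul_le_mul_right ?_ (Real.Gamma_pos_of_pos (show 0 < 1 - p by linarith))
  calc 2 * 2 ^ (2 * p) * (1 / 2 * √Real.pi) * Real.Gamma (1 - p)
      = 2 ^ (2 * p) * √Real.pi * Real.Gamma (1 - p) := by ring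
    _ ≤ 2 ^ (2 * p) * √Real.pi * (Real.Gamma (1 - 2 * p) * Real.Gamma (1 + p)) := by
        gcongr
        exact Gamma_one_sub_le (by linarith) (by linarith)
    _ = Real.Gamma (1 + p) * (Real.Gamma (1 - 2 * p) * 2 ^ (2 * p) * √Real.pi) := by ring
    _ = Real.Gamma (1 + p) * Real.Gamma (1 / 2 - p) * Real.Gamma (1 - p) := by
        rw [← duplication, mul_assoc]

lemma convexOn_one_add_rpow_sub_one_sub_rpow {q : ℝ} (hq₀ : 0 ≤ q) (hq₁ : q ≤ 1) :
    ConvexOn ℝ (Icc 0 1) fun y : ℝ ↦ (1 + y) ^ q - (1 - y) ^ q := by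
  refine convexOn_of_hasDerivWithinAt2_nonneg (convex_Icc 0 1)
    (f' := fun y ↦ q * ((1 + y) ^ (q - 1) + (1 - y) ^ (q - 1)))
    (f'' := fun y ↦ q * (1 - q) * ((1 - y) ^ (q - 2) - (1 + y) ^ (q - 2))) ?_ ?_ ?_ ?_
  · exact (((continuous_const.add continuous_id).rpow_const fun _ ↦ .inr hq₀).sub
      ((continuous_const.sub continuous_id).rpow_const fun _ ↦ .inr hq₀)).continuousOn
  all_goals
    rw [interior_Icc]
    rintro y ⟨hy₀, hy₁⟩
  · convert! ((hasDerivAt_one_add_rpow q (by linarith)).sub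
      (hasDerivAt_one_sub_rpow q hy₁)).hasDerivWithinAt using 1
    ring
  · convert! (((hasDerivAt_one_add_rpow (q - 1) (by linarith)).add
      (hasDerivAt_one_sub_rpow (q - 1) hy₁)).const_mul q).hasDerivWithinAt using 1
    rw [sub_sub, one_add_one_eq_two]
    ring
  · have := Real.rpow_le_rpow_of_nonpos (x := 1 - y) (y := 1 + y) (z := q - 2)
      (by linarith) (by linarith) (by linarith)
    exact mul_nonneg (mul_nonneg hq₀ (by linarith)) (by linarith)

lemma convexOn_one_add_sqrt_rpow_add_one_sub_sqrt_rpow {α : ℝ} (hα₁ : 1 ≤ α) (hα₂ : α ≤ 2) :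
    ConvexOn ℝ (Icc 0 1) fun z : ℝ ↦ (1 + √z) ^ α + (1 - √z) ^ α := by
  set k : ℝ → ℝ := fun y ↦ (1 + y) ^ (α - 1) - (1 - y) ^ (α - 1)
  have convex_k : ConvexOn ℝ (Icc 0 1) k :=
    convexOn_one_add_rpow_sub_one_sub_rpow (by linarith) (by linarith)
  have hderiv : ∀ z ∈ Ioo (0 : ℝ) 1, HasDerivAt (fun z : ℝ ↦ (1 + √z) ^ α + (1 - √z) ^ α)
      (α / 2 * (k √z / √z)) z := by
    rintro z ⟨hz₀, hz₁⟩
    have hsqrt := Real.hasDerivAt_sqrt hz₀.ne'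
    have hsqrt_lt : √z < 1 := by rwa [Real.sqrt_lt' one_pos, one_pow]
    convert! ((hasDerivAt_one_add_rpow α (by linarith [Real.sqrt_nonneg z])).comp z hsqrt).add
      ((hasDerivAt_one_sub_rpow α hsqrt_lt).comp z hsqrt) using 1
    simp only [k]
    ring
  have secant_mono : MonotoneOn (fun z ↦ α / 2 * (k √z / √z)) (Ioo 0 1) := by
    rintro z ⟨hz₀, hz₁⟩ z' ⟨hz₀', hz₁'⟩ hzz'
    have mem_Icc : ∀ {t : ℝ}, t < 1 → √t ∈ Icc (0 : ℝ) 1 := fun ht ↦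
      ⟨Real.sqrt_nonneg _, Real.sqrt_le_one.mpr ht.le⟩
    have := convex_k.secant_mono (left_mem_Icc.mpr zero_le_one) (mem_Icc hz₁) (mem_Icc hz₁')
      (Real.sqrt_pos.mpr hz₀).ne' (Real.sqrt_pos.mpr hz₀').ne' (Real.sqrt_le_sqrt hzz')
    simp only [k, add_zero, sub_zero, sub_self] at this
    exact mul_le_mul_of_nonneg_left this (by linarith)
  refine MonotoneOn.convexOn_of_deriv (convex_Icc 0 1) ?_ ?_ ?_
  · exact (((continuous_const.add Real.continuous_sqrt).rpow_const fun _ ↦ .inr (by linarith)).add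
      ((continuous_const.sub Real.continuous_sqrt).rpow_const
        fun _ ↦ .inr (by linarith))).continuousOn
  all_goals rw [interior_Icc]
  · exact fun z hz ↦ (hderiv z hz).differentiableAt.differentiableWithinAt
  · exact secant_mono.congr fun z hz ↦ (hderiv z hz).deriv.symm

lemma one_add_rpow_add_one_sub_rpow_le {α y : ℝ} (hα₁ : 1 ≤ α) (hα₂ : α ≤ 2) (hy : |y| ≤ 1) :
    (1 + y) ^ α + (1 - y) ^ α ≤ 2 + (2 ^ α - 2) * y ^ 2 := by
  have hy2 : y ^ 2 ≤ 1 := (sq_le_one_iff_abs_le_one y).mpr hy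
  have := (convexOn_one_add_sqrt_rpow_add_one_sub_sqrt_rpow hα₁ hα₂).2
    (left_mem_Icc.mpr zero_le_one) (right_mem_Icc.mpr zero_le_one)
    (sub_nonneg.mpr hy2) (sq_nonneg y) (by ring)
  have even : (1 + |y|) ^ α + (1 - |y|) ^ α = (1 + y) ^ α + (1 - y) ^ α := by
    rcases abs_choice y with h | h <;> rw [h]
    rw [sub_neg_eq_add, ← sub_eq_add_neg, add_comm]
  simp only [smul_eq_mul, mul_zero, mul_one, zero_add, Real.sqrt_zero, add_zero, sub_zero,
    Real.one_rpow, Real.sqrt_one, sub_self, Real.zero_rpow (by linarith : α ≠ 0),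
    Real.sqrt_sq_eq_abs, even, one_add_one_eq_two] at this
  linarith

lemma rpow_add_rpow_add_mul_le {α a c : ℝ} (hα₁ : 1 ≤ α) (hα₂ : α ≤ 2) (ha : 0 ≤ a) (hc : 0 ≤ c)
    (hac : a + c ≤ 2) : a ^ α + c ^ α + (2 ^ α - 2) * (a * c) ≤ (a + c) ^ α := by
  rcases (add_nonneg ha hc).eq_or_lt' with h0 | hpos
  · obtain ⟨rfl, rfl⟩ := (add_eq_zero_iff_of_nonneg ha hc).mp h0
    simp [Real.zero_rpow (by linarith : α ≠ 0)]
  set w := (a + c) / 2 with hw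
  set y := (a - c) / (a + c) with hy
  have hw₀ : 0 < w := by positivity
  have ha' : a = w * (1 + y) := by rw [hw, hy]; field_simp; ring
  have hc' : c = w * (1 - y) := by rw [hw, hy]; field_simp; ring
  have hy₁ : |y| ≤ 1 := by
    rw [hy, abs_div, abs_of_pos hpos, div_le_one hpos, abs_le]
    constructor <;> linarith
  have sq_le : w ^ 2 ≤ w ^ α := by
    rw [← Real.rpow_natCast]
    exact Real.rpow_le_rpow_of_exponent_ge hw₀ (by linarith) (by exact_mod_cast hα₂)
  have two_le : 0 ≤ (2 : ℝ) ^ α - 2 := by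
    simpa using Real.rpow_le_rpow_of_exponent_le one_le_two hα₁
  have hy2 : 0 ≤ 1 - y ^ 2 := sub_nonneg.mpr ((sq_le_one_iff_abs_le_one y).mpr hy₁)
  obtain ⟨hy₁l, hy₁u⟩ := abs_le.mp hy₁
  calc a ^ α + c ^ α + (2 ^ α - 2) * (a * c)
      = w ^ α * ((1 + y) ^ α + (1 - y) ^ α) + (2 ^ α - 2) * (1 - y ^ 2) * w ^ 2 := by
        rw [ha', hc', Real.mul_rpow hw₀.le (by linarith), Real.mul_rpow hw₀.le (by linarith)]
        ring
    _ ≤ w ^ α * (2 + (2 ^ α - 2) * y ^ 2) + (2 ^ α - 2) * (1 - y ^ 2) * w ^ α := by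
        exact add_le_add
          (mul_le_mul_of_nonneg_left (one_add_rpow_add_one_sub_rpow_le hα₁ hα₂ hy₁) (by positivity))
          (mul_le_mul_of_nonneg_left sq_le (mul_nonneg two_le hy2))
    _ = (a + c) ^ α := by
        rw [show a + c = w * 2 by ring, Real.mul_rpow hw₀.le zero_le_two]
        ring

/-! ### Section integrals -/

/-- Closed form of `p.v. ∫ t in (-a, c), ((ac)^p - ((a + t)(c - t))^p) / |t|^(1+α)` with
`p = (α - 1)/2`, the section integral over a chord split by the base point into lengths `a`, `c`. -/
noncomputable def chordIntegral (α a c : ℝ) : ℝ :=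
  (((a + c) / 2) ^ α * eulerBeta ((α + 1) / 2) ((2 - α) / 2) - a ^ α - c ^ α) / α *
    (a * c) ^ (-((α + 1) / 2))

lemma hasPrincipalValue_chordIntegral {α a c : ℝ} (hα₁ : 1 < α) (hα₂ : α < 2)
    (ha : 0 < a) (hc : 0 < c) :
    HasPrincipalValue
      (fun t ↦ ((a * c) ^ ((α - 1) / 2) - ((a + t) * (c - t)) ^ ((α - 1) / 2)) / |t| ^ (1 + α))
      (Ioo (-a) c) (chordIntegral α a c) := by
  have hD : 0 < a * c := mul_pos ha hc
  have hw : 0 < (a + c) / 2 := by positivity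
  have left_end : a * c - (c - a) / 2 * a = a * ((a + c) / 2) := by ring
  have right_end : a * c + (c - a) / 2 * c = c * ((a + c) / 2) := by ring
  have affine_part := hasPrincipalValue_rpow_sub_affine_rpow (m := (c - a) / 2)
    (by linarith) hα₂ ha hc (left_end ▸ mul_pos ha hw) (right_end ▸ mul_pos hc hw)
  have quadratic_part := HasPrincipalValue.of_integrableOn
    (integrableOn_affine_rpow_sub_quadratic_rpow hα₁.le hα₂ ha hc)
  rw [integral_affine_rpow_sub_quadratic_rpow hα₁ hα₂ ha hc] at quadratic_part
  have sq_half : (a * c) ^ (α - 1) = (a * c) ^ ((α - 1) / 2) * (a * c) ^ ((α - 1) / 2) := by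
    rw [← Real.rpow_add hD, add_halves]
  convert! ((affine_part.add quadratic_part).const_mul ((a * c) ^ (-((α - 1) / 2)))).congr
    measurableSet_Ioo ?_ using 1
  · rw [chordIntegral, left_end, right_end, show -((α + 1) / 2) = -((α - 1) / 2) - 1 by ring,
      Real.rpow_sub_one hD.ne', Real.mul_rpow ha.le hw.le, Real.mul_rpow hc.le hw.le,
      Real.mul_rpow (z := α) ha.le hc.le, Real.rpow_neg ha.le, Real.rpow_neg hc.le]
    field_simp
    ring
  · rintro t ⟨ht, -⟩
    have hquad : 0 ≤ (a + t) * (c - t) :=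
      mul_nonneg (by linarith [ht.1]) (by linarith [ht.2])
    simp only
    rw [← add_mul, sub_add_sub_cancel, sq_half, Real.mul_rpow hD.le hquad, Real.rpow_neg hD.le,
      ← neg_add', Real.rpow_neg (abs_nonneg t)]
    field_simp

lemma le_chordIntegral {α a c y : ℝ} (hα₁ : 1 ≤ α) (hα₂ : α < 2) (ha : 0 < a) (hc : 0 < c)
    (hac : a + c ≤ 2) (hy : |y| ≤ (a + c) / 2) :
    (eulerBeta ((α + 1) / 2) ((2 - α) / 2) - 2 ^ α) / α * |y| ^ α * (a * c) ^ (-((α + 1) / 2)) +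
        (2 ^ α - 2) / α * (a * c) ^ (-((α - 1) / 2)) ≤ chordIntegral α a c := by
  set B := eulerBeta ((α + 1) / 2) ((2 - α) / 2)
  have hD : 0 < a * c := mul_pos ha hc
  have hα₀ : 0 < α := by linarith
  have double : (2 : ℝ) ^ α * ((a + c) / 2) ^ α = (a + c) ^ α := by
    rw [← Real.mul_rpow zero_le_two (by positivity), mul_div_cancel₀ _ two_ne_zero]
  have numerator_le : (B - 2 ^ α) * |y| ^ α + (2 ^ α - 2) * (a * c) ≤
      ((a + c) / 2) ^ α * B - a ^ α - c ^ α := by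
    have := mul_le_mul_of_nonneg_left (Real.rpow_le_rpow (abs_nonneg y) hy hα₀.le)
      (sub_nonneg.mpr (two_rpow_le_eulerBeta (show -1 < α by linarith) hα₂))
    linarith [rpow_add_rpow_add_mul_le hα₁ hα₂.le ha.le hc.le hac]
  calc (B - 2 ^ α) / α * |y| ^ α * (a * c) ^ (-((α + 1) / 2)) +
        (2 ^ α - 2) / α * (a * c) ^ (-((α - 1) / 2))
      = ((B - 2 ^ α) * |y| ^ α + (2 ^ α - 2) * (a * c)) / α * (a * c) ^ (-((α + 1) / 2)) := by
        rw [show -((α + 1) / 2) = -((α - 1) / 2) - 1 by ring, Real.rpow_sub_one hD.ne']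
        field_simp
    _ ≤ (((a + c) / 2) ^ α * B - a ^ α - c ^ α) / α * (a * c) ^ (-((α + 1) / 2)) := by
        gcongr

section SphereChord

variable {E : Type*} [NormedAddCommGroup E] [InnerProductSpace ℝ E]

open scoped RealInnerProductSpace

lemma one_sub_norm_sq_add_smul {v h : E} (hv : ‖v‖ ≤ 1) (hh : ‖h‖ = 1) (t : ℝ) :
    1 - ‖v + t • h‖ ^ 2 =
      (√(⟪v, h⟫ ^ 2 - ‖v‖ ^ 2 + 1) + ⟪v, h⟫ + t) * (√(⟪v, h⟫ ^ 2 - ‖v‖ ^ 2 + 1) - ⟪v, h⟫ - t) := by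
  have sq_sqrt : √(⟪v, h⟫ ^ 2 - ‖v‖ ^ 2 + 1) ^ 2 = ⟪v, h⟫ ^ 2 - ‖v‖ ^ 2 + 1 :=
    Real.sq_sqrt (by nlinarith [sq_nonneg ⟪v, h⟫, norm_nonneg v])
  rw [norm_add_sq_real, inner_smul_right, norm_smul, Real.norm_eq_abs, hh, mul_one, sq_abs]
  linear_combination -sq_sqrt

theorem section_integral_lower_bound_general {α x : ℝ} (hα₁ : 1 < α) (hα₂ : α < 2) (hx : |x| < 1)
    {e h : E} (he : ‖e‖ = 1) (hh : ‖h‖ = 1) :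
    ∃ g : ℝ,
      HasPrincipalValue
        (fun t ↦ ((1 - ‖x • e‖ ^ 2) ^ ((α - 1) / 2) - (1 - ‖x • e + t • h‖ ^ 2) ^ ((α - 1) / 2)) /
          |t| ^ (1 + α))
        (Ioo (-x * ⟪e, h⟫ - √(x ^ 2 * ⟪e, h⟫ ^ 2 - x ^ 2 + 1))
          (-x * ⟪e, h⟫ + √(x ^ 2 * ⟪e, h⟫ ^ 2 - x ^ 2 + 1))) g ∧
      g ≥ (eulerBeta ((α + 1) / 2) ((2 - α) / 2) - 2 ^ α) / α * |⟪e, h⟫| ^ α *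
            (1 - x ^ 2) ^ (-((α + 1) / 2)) +
          ((2 : ℝ) ^ α - 2) / α * (1 - x ^ 2) ^ (-((α - 1) / 2)) := by
  have norm_v : ‖x • e‖ = |x| := by rw [norm_smul, he, mul_one, Real.norm_eq_abs]
  have hx₂ : x ^ 2 < 1 := (sq_lt_one_iff_abs_lt_one x).mpr hx
  have inner_sq_le : ⟪e, h⟫ ^ 2 ≤ 1 := by
    simpa [he, hh, sq_le_one_iff_abs_le_one] using abs_real_inner_le_norm e h
  have on_line := one_sub_norm_sq_add_smul (norm_v.trans_le hx.le) hh
  rw [real_inner_smul_left, norm_v, sq_abs, mul_pow] at on_line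
  set w := √(x ^ 2 * ⟪e, h⟫ ^ 2 - x ^ 2 + 1)
  have abs_inner_le : |⟪e, h⟫| ≤ w := Real.abs_le_sqrt (by nlinarith)
  have w_le : w ≤ 1 := Real.sqrt_le_one.mpr (by nlinarith)
  have at_center : 1 - x ^ 2 = (w + x * ⟪e, h⟫) * (w - x * ⟪e, h⟫) := by
    simpa [norm_v] using on_line 0
  have base_inside : |x * ⟪e, h⟫| < w :=
    Real.lt_sqrt (abs_nonneg _) |>.mpr (by rw [sq_abs]; linarith)
  obtain ⟨ha, hc⟩ := abs_lt.mp base_inside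
  refine ⟨chordIntegral α (w + x * ⟪e, h⟫) (w - x * ⟪e, h⟫), ?_, ?_⟩
  · simp only [norm_v, sq_abs, on_line, at_center]
    convert! hasPrincipalValue_chordIntegral hα₁ hα₂ (show 0 < w + x * ⟪e, h⟫ by linarith)
      (sub_pos.mpr hc) using 2 <;> ring
  · rw [at_center]
    exact le_chordIntegral hα₁.le hα₂ (by linarith) (by linarith) (by linarith) (by linarith)

end SphereChord

/-- Lower bound for the one-dimensional section integral: the principal value
`g(x,h)` exists and satisfies
`g(x,h) ≥ c₁ |h_n|^α (1-x²)^{-(α+1)/2} + c₂ (1-x²)^{-(α-1)/2}`,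
where `c₁ = (B((α+1)/2,(2-α)/2) - 2^α)/α` and `c₂ = (2^α - 2)/α`. -/
theorem section_integral_lower_bound (n : ℕ) (hn : 2 ≤ n) (α : ℝ) (hα1 : 1 < α)
    (hα2 : α < 2) (x : ℝ) (hx0 : 0 ≤ x) (hx1 : x < 1) (h : EuclideanSpace ℝ (Fin n))
    (hh : h ∈ sphere (0 : EuclideanSpace ℝ (Fin n)) 1)
    (hcoord : ℝ) (hhn : hcoord = h ⟨n - 1, by omega⟩)
    (xx : EuclideanSpace ℝ (Fin n)) (hxx : xx = EuclideanSpace.single ⟨n - 1, by omega⟩ x) :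
    ∃ g : ℝ,
      Tendsto (fun ε : ℝ =>
          ∫ t in Ioo (-x * hcoord - Real.sqrt (x ^ 2 * hcoord ^ 2 - x ^ 2 + 1))
              (-x * hcoord + Real.sqrt (x ^ 2 * hcoord ^ 2 - x ^ 2 + 1)) ∩
              {t : ℝ | ε < |t|},
            ((1 - ‖xx‖ ^ 2) ^ ((α - 1) / 2) - (1 - ‖xx + t • h‖ ^ 2) ^ ((α - 1) / 2)) /
              |t| ^ (1 + α))
        (𝓝[>] (0 : ℝ)) (𝓝 g) ∧
      g ≥ (eulerBeta ((α + 1) / 2) ((2 - α) / 2) - 2 ^ α) / α *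
            |hcoord| ^ α * (1 - x ^ 2) ^ (-((α + 1) / 2)) +
          ((2 : ℝ) ^ α - 2) / α * (1 - x ^ 2) ^ (-((α - 1) / 2)) := by
  set e : EuclideanSpace ℝ (Fin n) := EuclideanSpace.single ⟨n - 1, by omega⟩ 1
  have smul_e : x • e = xx := by
    ext i
    simp [e, hxx]
  have inner_e : inner ℝ e h = hcoord := by simp [e, hhn, EuclideanSpace.inner_single_left]
  obtain ⟨g, hg, hle⟩ := section_integral_lower_bound_general hα1 hα2
    (abs_lt.mpr ⟨by linarith, hx1⟩) (show ‖e‖ = 1 by simp [e]) (mem_sphere_zero_iff_norm.mp hh)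
  rw [smul_e, inner_e] at hg
  rw [inner_e] at hle
  exact ⟨g, hg.tendsto, hle⟩
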